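/- arXiv:2604.05862 — 8 statements merged into one kernel-verified Lean document; each statement's English description precedes it below -/
import Mathlib

section
/- Let M be a valid message pattern, θ = (i,t) a node, and j a process. Then the set {l : ℕ | (j,l) ∈ past(θ)} is downward closed and contained in {l | l < t}. Consequently there exists a least time t_j such that (j, t_j) ∉ past(θ); it satisfies t_j ≤ t, and (j,l) ∈ past(θ) if and only if l < t_j. Moreover, for j = i one has t_i = t. -/
/-- The happens-before relation of a message pattern `M`: the transitive closure of
"same process, strictly earlier time" together with the messages of `M`. -/
def hb {ι : Type*} (M : Set ((ι × ℕ) × (ι × ℕ))) : (ι × ℕ) → (ι × ℕ) → Prop :=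
  Relation.TransGen (fun θ θ' => (θ.1 = θ'.1 ∧ θ.2 < θ'.2) ∨ (θ, θ') ∈ M)

/-- A message pattern is valid if every message is sent strictly before it is delivered. -/
def ValidPattern {ι : Type*} (M : Set ((ι × ℕ) × (ι × ℕ))) : Prop :=
  ∀ m ∈ M, m.1.2 < m.2.2

/-- The past of a node `θ`: all nodes with a message chain to `θ`. -/
def past {ι : Type*} (M : Set ((ι × ℕ) × (ι × ℕ))) (θ : ι × ℕ) : Set (ι × ℕ) :=
  {θ' | hb M θ' θ}

open scoped Classical in
/-- The shift map `φ_{θ,Δ}`: fixes `past(θ) ∪ {θ}`, delays every other node by `Δ`. -/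
noncomputable def shiftMap {ι : Type*} (M : Set ((ι × ℕ) × (ι × ℕ))) (θ : ι × ℕ) (Δ : ℕ)
    (ν : ι × ℕ) : ι × ℕ :=
  if ν ∈ past M θ ∨ ν = θ then ν else (ν.1, ν.2 + Δ)

/-- The message pattern obtained by applying the shift map to both endpoints of
every message of `M`. -/
noncomputable def shiftPattern {ι : Type*} (M : Set ((ι × ℕ) × (ι × ℕ))) (θ : ι × ℕ)
    (Δ : ℕ) : Set ((ι × ℕ) × (ι × ℕ)) :=
  (fun m => (shiftMap M θ Δ m.1, shiftMap M θ Δ m.2)) '' M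

/-- The set of times `l` with `(j,l)` in the past of `θ = (i,t)` is downward closed and
contained in `{l | l < t}`; hence there is a least time `t_j` with `(j,t_j) ∉ past(θ)`,
which satisfies `t_j ≤ t`, characterizes the past of `θ` on process `j`'s line, and
equals `t` when `j = i`. -/
theorem past_on_process_line {ι : Type*} (M : Set ((ι × ℕ) × (ι × ℕ)))
    (hM : ValidPattern M) (i j : ι) (t : ℕ) :
    (∀ l l' : ℕ, l' ≤ l → (j, l) ∈ past M (i, t) → (j, l') ∈ past M (i, t)) ∧
    ({l : ℕ | (j, l) ∈ past M (i, t)} ⊆ {l : ℕ | l < t}) ∧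
    ∃ tj : ℕ, IsLeast {l : ℕ | (j, l) ∉ past M (i, t)} tj ∧ tj ≤ t ∧
      (∀ l : ℕ, (j, l) ∈ past M (i, t) ↔ l < tj) ∧ (j = i → tj = t) := by
  have down : ∀ l l' : ℕ, l' ≤ l → (j, l) ∈ past M (i, t) → (j, l') ∈ past M (i, t) := by
    intro l l' h hl
    rcases h.eq_or_lt with h | h
    · rwa [h]
    · exact Relation.TransGen.head (b := (j, l)) (Or.inl ⟨rfl, h⟩) hl
  have time : ∀ a b : ι × ℕ, hb M a b → a.2 < b.2 := by
    intro a b h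
    unfold hb at h
    induction h with
    | single h =>
      rcases h with h | h
      · exact h.2
      · exact hM _ h
    | tail _ h ih =>
      rcases h with h | h
      · exact ih.trans h.2
      · exact ih.trans (hM _ h)
  have bd : ∀ l : ℕ, (j, l) ∈ past M (i, t) → l < t := fun l h => time _ _ h
  have ex : ∃ l : ℕ, (j, l) ∉ past M (i, t) := ⟨t, fun h => lt_irrefl _ (bd t h)⟩
  classical
  have hs := Nat.find_spec ex
  have hle : Nat.find ex ≤ t := Nat.find_min' ex (fun h => lt_irrefl _ (bd t h))
  refine ⟨down, bd, Nat.find ex, ⟨hs, fun l hl => Nat.find_min' ex hl⟩, hle, ?_, ?_⟩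
  · intro l
    constructor
    · intro hl
      by_contra hc
      exact hs (down _ _ (not_lt.mp hc) hl)
    · intro hl
      exact not_not.mp (Nat.find_min ex hl)
  · intro hji
    by_contra hne
    exact hs (Relation.TransGen.single (Or.inl ⟨hji, lt_of_le_of_ne hle hne⟩))
end

section
/- Shift validity: Let M be a valid message pattern, θ a node, Δ > 0, and φ = φ_{θ,Δ} the shift map. Then φ(M) is a valid message pattern, i.e., for every message of φ(M) the time of its send node is strictly smaller than the time of its delivery node. -/
/-- Shift validity: the shifted pattern `φ(M)` is again a valid message pattern. -/
theorem shiftPattern_valid {ι : Type*} (M : Set ((ι × ℕ) × (ι × ℕ)))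
    (hM : ValidPattern M) (θ : ι × ℕ) (Δ : ℕ) (hΔ : 0 < Δ) :
    ValidPattern (shiftPattern M θ Δ) := by
  rintro _ ⟨⟨a, b⟩, hm, rfl⟩
  have hlt : a.2 < b.2 := hM _ hm
  have key : (b ∈ past M θ ∨ b = θ) → (a ∈ past M θ ∨ a = θ) := by
    rintro (h | rfl)
    · exact Or.inl (Relation.TransGen.head (Or.inr hm) h)
    · exact Or.inl (Relation.TransGen.single (Or.inr hm))
  show (shiftMap M θ Δ a).2 < (shiftMap M θ Δ b).2
  unfold shiftMap
  by_cases hb' : b ∈ past M θ ∨ b = θ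
  · rw [if_pos hb', if_pos (key hb')]
    exact hlt
  · rw [if_neg hb']
    split_ifs
    · exact Nat.lt_add_right Δ hlt
    · exact Nat.add_lt_add_right hlt Δ
end

section
/- Let M be a valid message pattern, θ a node, Δ > 0, and φ = φ_{θ,Δ} the shift map. For every process j, the function sending m : ℕ to the time of φ(j,m) is strictly monotone; consequently φ is injective on nodes. -/
/-- For every process `j`, the time of `φ(j,m)` is strictly monotone in `m`;
consequently the shift map `φ` is injective on nodes. -/
theorem shiftMap_strictMono_injective {ι : Type*} (M : Set ((ι × ℕ) × (ι × ℕ)))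
    (hM : ValidPattern M) (θ : ι × ℕ) (Δ : ℕ) (hΔ : 0 < Δ) :
    (∀ j : ι, StrictMono fun m : ℕ => (shiftMap M θ Δ (j, m)).2) ∧
    Function.Injective (shiftMap M θ Δ) := by
  have key : ∀ j : ι, StrictMono fun m : ℕ => (shiftMap M θ Δ (j, m)).2 := by
    intro j a b hab
    have hstep : hb M (j, a) (j, b) := Relation.TransGen.single (Or.inl ⟨rfl, hab⟩)
    have hdown : ((j, b) ∈ past M θ ∨ (j, b) = θ) → ((j, a) ∈ past M θ ∨ (j, a) = θ) := by
      rintro (h | h)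
      · exact Or.inl (Relation.TransGen.trans hstep h)
      · subst h
        exact Or.inl hstep
    simp only [shiftMap]
    by_cases hb' : (j, b) ∈ past M θ ∨ (j, b) = θ
    · rw [if_pos hb', if_pos (hdown hb')]
      exact hab
    · rw [if_neg hb']
      split_ifs
      · show a < b + Δ
        omega
      · show a + Δ < b + Δ
        omega
  have hfst : ∀ ν, (shiftMap M θ Δ ν).1 = ν.1 := by
    intro ν
    unfold shiftMap
    split_ifs <;> rfl
  refine ⟨key, ?_⟩
  rintro ⟨i, a⟩ ⟨j, b⟩ h
  have hij : i = j := by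
    have := congrArg Prod.fst h
    rwa [hfst, hfst] at this
  subst hij
  have hab : a = b := (key i).injective (congrArg Prod.snd h)
  rw [hab]
end

section
/- Delaying the future (pattern form): Let M be a valid message pattern, θ a node, Δ > 0, and φ = φ_{θ,Δ} the shift map. Then for all nodes θ₁ and θ₂: θ₁ ⤳ θ₂ with respect to M if and only if φ(θ₁) ⤳ φ(θ₂) with respect to φ(M). Moreover, φ fixes every node of past(θ) ∪ {θ}, and moves every other node (j,m) to (j, m+Δ), i.e., delays it by exactly Δ. -/
theorem shiftMap_fst {ι : Type*} (M : Set ((ι × ℕ) × (ι × ℕ))) (θ : ι × ℕ) (Δ : ℕ)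
    (a : ι × ℕ) : (shiftMap M θ Δ a).1 = a.1 := by
  unfold shiftMap; split_ifs <;> rfl

theorem shiftMap_lt {ι : Type*} (M : Set ((ι × ℕ) × (ι × ℕ))) (θ : ι × ℕ) (Δ : ℕ)
    (a b : ι × ℕ) (h : a.1 = b.1) (hlt : a.2 < b.2) :
    (shiftMap M θ Δ a).2 < (shiftMap M θ Δ b).2 := by
  have key : (b ∈ past M θ ∨ b = θ) → (a ∈ past M θ ∨ a = θ) := by
    rintro (hb' | rfl)
    · exact Or.inl (Relation.TransGen.head (Or.inl ⟨h, hlt⟩) hb')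
    · exact Or.inl (Relation.TransGen.single (Or.inl ⟨h, hlt⟩))
  unfold shiftMap
  split_ifs with h1 h2 h2
  · exact hlt
  · show a.2 < b.2 + Δ
    omega
  · exact absurd (key h2) h1
  · show a.2 + Δ < b.2 + Δ
    omega

theorem hb_of_shift {ι : Type*} (M : Set ((ι × ℕ) × (ι × ℕ))) (θ : ι × ℕ) (Δ : ℕ)
    (a x : ι × ℕ) (h : hb (shiftPattern M θ Δ) (shiftMap M θ Δ a) x) :
    ∀ b : ι × ℕ, x.1 = b.1 → x.2 ≤ (shiftMap M θ Δ b).2 → hb M a b := by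
  have le_of : ∀ c d : ι × ℕ, c.1 = d.1 →
      (shiftMap M θ Δ c).2 ≤ (shiftMap M θ Δ d).2 → c.2 ≤ d.2 := by
    intro c d h1 h2
    by_contra h3
    have := shiftMap_lt M θ Δ d c h1.symm (by omega)
    omega
  have ext_le : ∀ c d b : ι × ℕ, hb M c d → d.1 = b.1 → d.2 ≤ b.2 → hb M c b := by
    intro c d b h1 h2 h3
    rcases h3.eq_or_lt with h4 | h4
    · rwa [← Prod.ext h2 h4]
    · exact Relation.TransGen.tail h1 (Or.inl ⟨h2, h4⟩)
  induction h with
  | single h =>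
    intro b hb1 hb2
    rcases h with ⟨h1, h2⟩ | ⟨⟨s, d⟩, hm, heq⟩
    · rw [shiftMap_fst] at h1
      have h3 : a.1 = b.1 := h1.trans hb1
      refine Relation.TransGen.single (Or.inl ⟨h3, ?_⟩)
      by_contra h4
      rcases (not_lt.mp h4).eq_or_lt with h5 | h5
      · rw [Prod.ext h3.symm h5] at hb2
        omega
      · have := shiftMap_lt M θ Δ b a h3.symm h5
        omega
    · simp only [Prod.mk.injEq] at heq
      obtain ⟨e1, rfl⟩ := heq
      rw [shiftMap_fst] at hb1
      have hf : s.1 = a.1 := by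
        rw [← shiftMap_fst M θ Δ s, e1, shiftMap_fst]
      have hsa : s = a := Prod.ext hf
        (le_antisymm (le_of _ _ hf (by rw [e1])) (le_of _ _ hf.symm (by rw [e1])))
      subst hsa
      exact ext_le _ d _ (Relation.TransGen.single (Or.inr hm)) hb1 (le_of _ _ hb1 hb2)
  | tail _ h ih =>
    intro b hb1 hb2
    rcases h with ⟨h1, h2⟩ | ⟨⟨s, d⟩, hm, heq⟩
    · exact ih b (h1.trans hb1) (by omega)
    · simp only [Prod.mk.injEq] at heq
      obtain ⟨rfl, rfl⟩ := heq
      rw [shiftMap_fst] at hb1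
      exact ext_le _ d _ (Relation.TransGen.tail (ih s (shiftMap_fst _ _ _ _) le_rfl)
        (Or.inr hm)) hb1 (le_of _ _ hb1 hb2)

/-- Delaying the future (pattern form): `θ₁ ⤳ θ₂` w.r.t. `M` iff `φ(θ₁) ⤳ φ(θ₂)`
w.r.t. `φ(M)`; moreover `φ` fixes every node of `past(θ) ∪ {θ}` and delays every
other node `(j,m)` to `(j, m+Δ)`. -/
theorem delaying_the_future {ι : Type*} (M : Set ((ι × ℕ) × (ι × ℕ)))
    (hM : ValidPattern M) (θ : ι × ℕ) (Δ : ℕ) (hΔ : 0 < Δ) :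
    (∀ θ₁ θ₂ : ι × ℕ,
      hb M θ₁ θ₂ ↔ hb (shiftPattern M θ Δ) (shiftMap M θ Δ θ₁) (shiftMap M θ Δ θ₂)) ∧
    (∀ ν ∈ past M θ ∪ {θ}, shiftMap M θ Δ ν = ν) ∧
    (∀ ν : ι × ℕ, ν ∉ past M θ ∪ {θ} → shiftMap M θ Δ ν = (ν.1, ν.2 + Δ)) := by
  refine ⟨fun a b => ⟨fun h => ?_, fun h => ?_⟩, fun ν hν => ?_, fun ν hν => ?_⟩
  · refine Relation.TransGen.lift (shiftMap M θ Δ) ?_ _ _ h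
    rintro c d (⟨h1, h2⟩ | hm)
    · exact Or.inl ⟨by rw [shiftMap_fst, shiftMap_fst, h1], shiftMap_lt M θ Δ c d h1 h2⟩
    · exact Or.inr ⟨(c, d), hm, rfl⟩
  · exact hb_of_shift M θ Δ a _ h b (shiftMap_fst _ _ _ _) le_rfl
  · exact if_pos hν
  · exact if_neg hν
end

section
/- Reordering theorem (pattern form): Let M be a valid message pattern and let X = (p, s_X, e_X) and Y = (q, s_Y, e_Y) be operations with s_X ≤ e_Y, ¬(X mc Y) (i.e., ¬(X.s ⤳ Y.e)), and X.s ≠ Y.e. Set θ = Y.e, Δ = e_Y − s_X + 1, and φ = φ_{θ,Δ}. Then: (i) φ fixes both Y.s and Y.e, while φ(X.s) = (p, e_Y + 1) and φ(X.e) = (p, e_X + Δ); in particular, after the shift Y precedes X. (ii) For every operation Z = (z, s_Z, e_Z) with e_X < s_Z, ¬(Z.s ⤳ Y.e) and Z.s ≠ Y.e, the time of φ(X.e) is strictly less than the time of φ(Z.s); in particular, after the shift X still precedes Z. -/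
/-- Reordering theorem (pattern form): shifting with pivot `θ = Y.e` and delay
`Δ = e_Y - s_X + 1` fixes `Y.s` and `Y.e`, moves `X.s` to `(p, e_Y + 1)` and `X.e`
to `(p, e_X + Δ)` — so after the shift `Y` precedes `X` — and any operation `Z`
that `X` precedes and that has no message chain to `Y.e` is still preceded by `X`
after the shift. -/
theorem reordering {ι : Type*} (M : Set ((ι × ℕ) × (ι × ℕ))) (hM : ValidPattern M)
    (p q : ι) (sX eX sY eY : ℕ) (hX : sX ≤ eX) (hY : sY ≤ eY) (hse : sX ≤ eY)
    (hmc : ¬ hb M (p, sX) (q, eY)) (hne : (p, sX) ≠ (q, eY)) :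
    (shiftMap M (q, eY) (eY - sX + 1) (q, sY) = (q, sY) ∧
     shiftMap M (q, eY) (eY - sX + 1) (q, eY) = (q, eY) ∧
     shiftMap M (q, eY) (eY - sX + 1) (p, sX) = (p, eY + 1) ∧
     shiftMap M (q, eY) (eY - sX + 1) (p, eX) = (p, eX + (eY - sX + 1)) ∧
     (shiftMap M (q, eY) (eY - sX + 1) (q, eY)).2 <
       (shiftMap M (q, eY) (eY - sX + 1) (p, sX)).2) ∧
    (∀ (z : ι) (sZ eZ : ℕ), sZ ≤ eZ → eX < sZ →
      ¬ hb M (z, sZ) (q, eY) → (z, sZ) ≠ (q, eY) →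
      (shiftMap M (q, eY) (eY - sX + 1) (p, eX)).2 <
        (shiftMap M (q, eY) (eY - sX + 1) (z, sZ)).2) := by
  have step : ∀ (r : ι) (a b : ℕ), a < b → hb M (r, a) (r, b) := fun r a b h =>
    Relation.TransGen.single (Or.inl ⟨rfl, h⟩)
  have fixed : ∀ (ν : ι × ℕ) (D : ℕ), (hb M ν (q, eY) ∨ ν = (q, eY)) →
      shiftMap M (q, eY) D ν = ν := fun ν D h => if_pos h
  have moved : ∀ (ν : ι × ℕ) (D : ℕ), ¬ hb M ν (q, eY) → ν ≠ (q, eY) →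
      shiftMap M (q, eY) D ν = (ν.1, ν.2 + D) := fun ν D h h' =>
    if_neg (fun hh => hh.elim h h')
  have hYs : hb M (q, sY) (q, eY) ∨ (q, sY) = (q, eY) := by
    rcases hY.lt_or_eq with h | h
    · exact Or.inl (step q _ _ h)
    · exact Or.inr (by rw [h])
  have hXe : ¬ hb M (p, eX) (q, eY) ∧ (p, eX) ≠ (q, eY) := by
    rcases hX.lt_or_eq with h | h
    · refine ⟨fun hh => hmc ((step p _ _ h).trans hh), fun hh => hmc ?_⟩
      rw [← hh]
      exact step p _ _ h
    · subst h
      exact ⟨hmc, hne⟩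
  have e1 := fixed (q, sY) (eY - sX + 1) hYs
  have e2 := fixed (q, eY) (eY - sX + 1) (Or.inr rfl)
  have e3 : shiftMap M (q, eY) (eY - sX + 1) (p, sX) = (p, eY + 1) := by
    rw [moved _ _ hmc hne]
    exact Prod.ext rfl (by simp only; omega)
  have e4 := moved (p, eX) (eY - sX + 1) hXe.1 hXe.2
  refine ⟨⟨e1, e2, e3, e4, ?_⟩, ?_⟩
  · rw [e2, e3]
    exact Nat.lt_succ_self eY
  · intro z sZ eZ _ hlt hz hz'
    rw [e4, moved _ _ hz hz']
    exact Nat.add_lt_add_right hlt _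
end

section
/- Sequential no-a-b-a lemma: Let H be an atomic register history over a value type α in which values are written at most once, and let i < j < k be positions of H holding operations that involve the values a, b, c : Option α, respectively. If a ≠ b, then a ≠ c. -/
/-- A register operation: a write of a value `v : α`, or a read returning
`w : Option α` (`read none` models reading the initial default value `⊥`). -/
inductive RegOp (α : Type*) where
  | write (v : α)
  | read (w : Option α)
  deriving DecidableEq

/-- The value of the last write in a list of register operations (`none` if there is
no write). -/
def lastWritten {α : Type*} (H : List (RegOp α)) : Option α :=
  H.foldl (fun acc op => match op with | .write v => some v | .read _ => acc) none

/-- A sequential history `H` is an atomic register history if every read returns the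
most recently written value (and `none` if no value was written before it). -/
def IsAtomicHistory {α : Type*} (H : List (RegOp α)) : Prop :=
  ∀ (k : ℕ) (w : Option α), H[k]? = some (RegOp.read w) → w = lastWritten (H.take k)

/-- Values are written at most once in `H`: no two distinct positions hold writes of
the same value. -/
def WrittenAtMostOnce {α : Type*} (H : List (RegOp α)) : Prop :=
  ∀ (i j : ℕ) (v : α), H[i]? = some (RegOp.write v) → H[j]? = some (RegOp.write v) → i = j

/-- An operation involves `w : Option α` if it is `read w`, or a `write v` with
`w = some v`. -/
def Involves {α : Type*} (op : RegOp α) (w : Option α) : Prop :=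
  op = RegOp.read w ∨ ∃ v : α, op = RegOp.write v ∧ w = some v

theorem lastWritten_take_succ {α : Type*} (H : List (RegOp α)) (n : ℕ) :
    lastWritten (H.take (n + 1)) = match H[n]? with
      | some (.write v) => some v
      | _ => lastWritten (H.take n) := by
  rw [List.take_add_one]
  rcases h : H[n]? with _ | (v | w) <;> simp [lastWritten]

theorem exists_write_of_ne {α : Type*} (H : List (RegOp α)) (m n : ℕ) (hmn : m ≤ n)
    (hne : lastWritten (H.take m) ≠ lastWritten (H.take n)) :
    ∃ p v, m ≤ p ∧ p < n ∧ H[p]? = some (RegOp.write v) ∧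
      lastWritten (H.take n) = some v := by
  induction n, hmn using Nat.le_induction with
  | base => exact absurd rfl hne
  | succ n hmn ih =>
    have hs := lastWritten_take_succ H n
    rcases h : H[n]? with _ | (v | w)
    · rw [h] at hs
      simp only at hs
      rw [hs] at hne ⊢
      obtain ⟨p, v, h1, h2, h3⟩ := ih hne
      exact ⟨p, v, h1, by omega, h3⟩
    · rw [h] at hs
      exact ⟨n, v, hmn, by omega, h, hs⟩
    · rw [h] at hs
      simp only at hs
      rw [hs] at hne ⊢
      obtain ⟨p, v, h1, h2, h3⟩ := ih hne
      exact ⟨p, v, h1, by omega, h3⟩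

theorem lastWritten_of_involves {α : Type*} (H : List (RegOp α)) (hA : IsAtomicHistory H)
    (n : ℕ) (op : RegOp α) (h : H[n]? = some op) (w : Option α) (hw : Involves op w) :
    lastWritten (H.take (n + 1)) = w := by
  rw [lastWritten_take_succ, h]
  rcases hw with rfl | ⟨v, rfl, rfl⟩
  · exact (hA n w h).symm
  · rfl

/-- Sequential no-a-b-a lemma: in an atomic register history in which values are
written at most once, if positions `i < j < k` hold operations involving `a`, `b`,
`c` respectively and `a ≠ b`, then `a ≠ c`. -/
theorem no_aba_sequential {α : Type*} (H : List (RegOp α)) (hA : IsAtomicHistory H)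
    (hOnce : WrittenAtMostOnce H) (i j k : ℕ) (hij : i < j) (hjk : j < k)
    (opi opj opk : RegOp α)
    (hi : H[i]? = some opi) (hj : H[j]? = some opj) (hk : H[k]? = some opk)
    (a b c : Option α)
    (ha : Involves opi a) (hb : Involves opj b) (hc : Involves opk c)
    (hab : a ≠ b) : a ≠ c := by
  rintro rfl
  have h1 := lastWritten_of_involves H hA i opi hi a ha
  have h2 := lastWritten_of_involves H hA j opj hj b hb
  have h3 := lastWritten_of_involves H hA k opk hk a hc
  obtain ⟨p, v, hp1, hp2, hp, hv⟩ := exists_write_of_ne H (j + 1) (k + 1) (by omega)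
    (by rw [h2, h3]; exact hab.symm)
  have hav : a = some v := h3.symm.trans hv
  obtain ⟨q, u, hq1, hq2, hq, hu⟩ := exists_write_of_ne H 0 (i + 1) (by omega)
    (by rw [h1, hav]; simp [lastWritten])
  have huv : u = v := Option.some.inj (hu.symm.trans (h1.trans hav))
  subst huv
  have := hOnce p q u hp hq
  omega
end

section
/- Observers become witnesses after the shift (core of the quorum/witness theorem): Let M be a valid message pattern and let X = (a, s, e) be an operation of process a with s ≤ e. Set θ = X.e = (a, e), Δ = e − s + 1, and let φ = φ_{θ,Δ} be the shift map. Then every node ν with X.s ⤳ ν (with respect to M) and time(φ(ν)) ≤ e satisfies ν ⤳ X.e (with respect to M) or ν = X.e. In other words, after delaying all events outside past(X.e) ∪ {X.e} by Δ, any node that a message chain from X.s reaches by time e lies on a message chain from X.s to X.e, so its process is a witness for X. -/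
/-- Observers become witnesses after the shift: with pivot `θ = X.e = (a,e)` and delay
`Δ = e - s + 1`, every node `ν` reached by a message chain from `X.s = (a,s)` whose
shifted time is at most `e` must lie on a message chain from `X.s` to `X.e`, i.e.
`ν ⤳ X.e` or `ν = X.e`. -/
theorem observers_are_witnesses {ι : Type*} (M : Set ((ι × ℕ) × (ι × ℕ)))
    (hM : ValidPattern M) (a : ι) (s e : ℕ) (hse : s ≤ e) :
    ∀ ν : ι × ℕ, hb M (a, s) ν → (shiftMap M (a, e) (e - s + 1) ν).2 ≤ e →
      hb M ν (a, e) ∨ ν = (a, e) := by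
  intro ν hν hle
  by_contra hcon
  have hlt : s < ν.2 := by
    clear hle hcon
    unfold hb at hν
    induction hν with
    | single h =>
      rcases h with h | h
      · exact h.2
      · exact hM _ h
    | tail _ h ih =>
      rcases h with h | h
      · exact ih.trans h.2
      · exact ih.trans (hM _ h)
  have hcon' : ¬ (ν ∈ past M (a, e) ∨ ν = (a, e)) := hcon
  unfold shiftMap at hle
  rw [if_neg hcon'] at hle
  simp only at hle
  omega
end

section
/- Non-transitivity of message chains between operations: There exist a valid message pattern M over the process type Fin 3 and operations X, Y, Z such that X mc Y and Y mc Z, but not X mc Z. -/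
/-- Non-transitivity of message chains between operations: there are a valid message
pattern over `Fin 3` and operations `X = (p,sX,eX)`, `Y = (q,sY,eY)`, `Z = (z,sZ,eZ)`
with `X mc Y` and `Y mc Z` but not `X mc Z`. -/
theorem mc_not_transitive :
    ∃ (M : Set ((Fin 3 × ℕ) × (Fin 3 × ℕ))) (p q z : Fin 3) (sX eX sY eY sZ eZ : ℕ),
      ValidPattern M ∧ sX ≤ eX ∧ sY ≤ eY ∧ sZ ≤ eZ ∧
      hb M (p, sX) (q, eY) ∧ hb M (q, sY) (z, eZ) ∧ ¬ hb M (p, sX) (z, eZ) := by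
  refine ⟨{((0, 0), (1, 3)), ((1, 1), (2, 2))}, 0, 1, 2, 0, 0, 0, 3, 0, 2, ?_, le_refl _,
    by norm_num, by norm_num, ?_, ?_, ?_⟩
  · rintro m (rfl | rfl) <;> norm_num
  · exact Relation.TransGen.single (Or.inr (Or.inl rfl))
  · refine Relation.TransGen.tail (b := (1, 1)) (Relation.TransGen.single (Or.inl ?_))
      (Or.inr (Or.inr rfl))
    exact ⟨rfl, by norm_num⟩
  · intro h
    -- every node reachable from `(0, 0)` is on process 0, or on process 1 at time at least 3
    have key : ∀ θ : Fin 3 × ℕ,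
        hb {((0, 0), (1, 3)), ((1, 1), (2, 2))} ((0 : Fin 3), 0) θ →
          θ.1 = 0 ∨ (θ.1 = 1 ∧ 3 ≤ θ.2) := by
      intro θ hθ
      have step : ∀ a b : Fin 3 × ℕ, (a.1 = 0 ∨ (a.1 = 1 ∧ 3 ≤ a.2)) →
          ((a.1 = b.1 ∧ a.2 < b.2) ∨
            (a, b) ∈ ({((0, 0), (1, 3)), ((1, 1), (2, 2))} :
              Set ((Fin 3 × ℕ) × (Fin 3 × ℕ)))) →
          (b.1 = 0 ∨ (b.1 = 1 ∧ 3 ≤ b.2)) := by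
        rintro a b ha (⟨h1, h2⟩ | hm | hm)
        · rw [← h1]
          rcases ha with h0 | ⟨h0, h3⟩
          · exact Or.inl h0
          · exact Or.inr ⟨h0, by omega⟩
        · obtain ⟨rfl, rfl⟩ := Prod.mk.inj hm
          simp
        · obtain ⟨rfl, rfl⟩ := Prod.mk.inj hm
          simp at ha
      unfold hb at hθ
      induction hθ with
      | single h => exact step _ _ (Or.inl rfl) h
      | tail _ h ih => exact step _ _ ih h
    have := key _ h
    simp at this
end
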